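/- The one-dimensional functions h_j(y) := p̂_j^3(2y−1) − (1−y) p_{j−1}^3(2y−1), j ≥ 1, are orthogonal with respect to the weight (1−y) on (0,1): for all j, m ≥ 1 there exists a positive real c_j such that ∫_{0}^{1} (1−y) h_j(y) h_m(y) dy = c_j δ_{jm}. -/

import Mathlib

open MeasureTheory

/-- Jacobi polynomial with parameters `(α, 0)`, via the Rodrigues formula. -/
noncomputable def jacobiP (α : ℝ) (n : ℕ) (x : ℝ) : ℝ :=
  1 / (2 ^ n * (n.factorial : ℝ) * (1 - x) ^ α) *
    iteratedDeriv n (fun t : ℝ => (1 - t) ^ α * (t ^ 2 - 1) ^ n) x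

/-- Integrated Jacobi polynomial `p̂_n^α`. -/
noncomputable def jacobiPhat (α : ℝ) (n : ℕ) (x : ℝ) : ℝ :=
  if n = 0 then 1 else ∫ ξ in (-1 : ℝ)..x, jacobiP α (n - 1) ξ

/-- The function `h_j(y) = p̂_j^3(2y-1) - (1-y) p_{j-1}^3(2y-1)`. -/
noncomputable def hFun (j : ℕ) (y : ℝ) : ℝ :=
  jacobiPhat 3 j (2 * y - 1) - (1 - y) * jacobiP 3 (j - 1) (2 * y - 1)

open Polynomial in
noncomputable def rodF (n : ℕ) : ℝ[X] :=
  C (1 / (2 ^ n * (n.factorial : ℝ))) * ((1 - X) ^ 3 * (X ^ 2 - 1) ^ n)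

open Polynomial in
lemma rodF_dvd (n : ℕ) : ((1 : ℝ[X]) - X) ^ (n + 3) ∣ rodF n := by
  refine ⟨C (1 / (2 ^ n * (n.factorial : ℝ))) * (-(X + 1)) ^ n, ?_⟩
  have : (X ^ 2 - 1 : ℝ[X]) = (1 - X) * (-(X + 1)) := by ring
  rw [rodF, this, mul_pow]; ring

open Polynomial in
lemma exists_Q (n : ℕ) : ∃ Q : ℝ[X], derivative^[n] (rodF n) = (1 - X) ^ 3 * Q := by
  have := Polynomial.pow_sub_dvd_iterate_derivative_of_pow_dvd n (rodF_dvd n)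
  simpa [Dvd.dvd] using this

open Polynomial in
noncomputable def jacQ (n : ℕ) : ℝ[X] := (exists_Q n).choose

open Polynomial in
lemma jacQ_spec (n : ℕ) : derivative^[n] (rodF n) = (1 - X) ^ 3 * jacQ n :=
  (exists_Q n).choose_spec

open Polynomial in
lemma one_sub_X_eq : ((1 : ℝ[X]) - X) = -(X - C 1) := by simp

open Polynomial in
lemma natDegree_one_sub : ((1 : ℝ[X]) - X).natDegree = 1 := by
  rw [one_sub_X_eq, natDegree_neg, natDegree_X_sub_C]

open Polynomial in
lemma one_sub_ne : ((1 : ℝ[X]) - X) ≠ 0 := by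
  intro h; have := natDegree_one_sub; rw [h] at this; simp at this

open Polynomial in
lemma natDegree_rodF (n : ℕ) : (rodF n).natDegree = 2 * n + 3 := by
  have h1 : (X ^ 2 - 1 : ℝ[X]).natDegree = 2 := by
    simpa using natDegree_X_pow_sub_C (n := 2) (r := (1 : ℝ))
  have h2 : (X ^ 2 - 1 : ℝ[X]) ≠ 0 := by
    intro h; rw [h] at h1; simp at h1
  have h3 : (1 / (2 ^ n * (n.factorial : ℝ))) ≠ 0 := by positivity
  rw [rodF, natDegree_C_mul h3, natDegree_mul (pow_ne_zero _ one_sub_ne) (pow_ne_zero _ h2),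
    natDegree_pow, natDegree_pow, h1, natDegree_one_sub]
  ring

open Polynomial in
lemma jacQ_ne (n : ℕ) : jacQ n ≠ 0 := by
  intro h
  have h1 := jacQ_spec n
  rw [h, mul_zero] at h1
  have h2 := congrArg (fun p => p.coeff (n + 3)) h1
  simp only [coeff_iterate_derivative, coeff_zero, nsmul_eq_mul] at h2
  have h3 : n + 3 + n = (rodF n).natDegree := by rw [natDegree_rodF]; ring
  have h4 : rodF n ≠ 0 := by
    intro h; have := natDegree_rodF n; rw [h] at this; simp at this
  rw [mul_eq_zero] at h2
  rcases h2 with h2 | h2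
  · have h5 : (n + 3 + n).descFactorial n = 0 := by exact_mod_cast h2
    rw [Nat.descFactorial_eq_zero_iff_lt] at h5
    omega
  · rw [h3] at h2
    exact h4 (leadingCoeff_eq_zero.mp h2)

open Polynomial in
lemma natDegree_jacQ (n : ℕ) : (jacQ n).natDegree ≤ n := by
  have h := natDegree_iterate_derivative (rodF n) n
  rw [jacQ_spec, natDegree_mul (pow_ne_zero _ one_sub_ne) (jacQ_ne n), natDegree_pow,
    natDegree_one_sub, natDegree_rodF] at h
  omega

open Polynomial in
lemma parts (n : ℕ) : ∀ (F R : ℝ[X]), ((X ^ 2 - 1 : ℝ[X]) ^ n ∣ F) →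
    ∫ x in (-1 : ℝ)..1, (derivative^[n] F).eval x * R.eval x
      = (-1) ^ n * ∫ x in (-1 : ℝ)..1, F.eval x * (derivative^[n] R).eval x := by
  suffices H : ∀ (F : ℝ[X]) (k : ℕ), ((X ^ 2 - 1 : ℝ[X]) ^ k ∣ F) → ∀ j ≤ k, ∀ R : ℝ[X],
      ∫ x in (-1 : ℝ)..1, (derivative^[j] F).eval x * R.eval x
      = (-1) ^ j * ∫ x in (-1 : ℝ)..1, F.eval x * (derivative^[j] R).eval x from
    fun F R h => H F n h n le_rfl R
  intro F k hF j
  induction j with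
  | zero => intro _ R; simp
  | succ j ih =>
    intro hj R
    have hd := Polynomial.pow_sub_dvd_iterate_derivative_of_pow_dvd j hF
    have hd1 : (X ^ 2 - 1 : ℝ[X]) ∣ derivative^[j] F :=
      (dvd_pow_self _ (by omega)).trans hd
    obtain ⟨G, hG⟩ := hd1
    have e1 : (derivative^[j] F).eval 1 = 0 := by rw [hG]; simp
    have e2 : (derivative^[j] F).eval (-1) = 0 := by rw [hG]; simp
    have key := intervalIntegral.integral_deriv_mul_eq_sub (a := (-1 : ℝ)) (b := 1)
      (u := fun x => (derivative^[j] F).eval x) (v := fun x => R.eval x)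
      (u' := fun x => (derivative (derivative^[j] F)).eval x)
      (v' := fun x => (derivative R).eval x)
      (fun x _ => Polynomial.hasDerivAt _ x) (fun x _ => Polynomial.hasDerivAt _ x)
      ((Polynomial.continuous _).intervalIntegrable _ _)
      ((Polynomial.continuous _).intervalIntegrable _ _)
    rw [e1, e2, intervalIntegral.integral_add
      (Continuous.intervalIntegrable (by fun_prop) _ _)
      (Continuous.intervalIntegrable (by fun_prop) _ _), ih (by omega)] at key
    rw [Function.iterate_succ_apply', Function.iterate_succ_apply, pow_succ]
    linarith

open Polynomial in
lemma orth_lt {m n : ℕ} (h : m < n) :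
    ∫ x in (-1 : ℝ)..1, (1 - x) ^ 3 * (jacQ n).eval x * (jacQ m).eval x = 0 := by
  have hd : (X ^ 2 - 1 : ℝ[X]) ^ n ∣ rodF n := by
    rw [rodF, ← mul_assoc]; exact dvd_mul_left _ _
  have := parts n (rodF n) (jacQ m) hd
  rw [iterate_derivative_eq_zero (lt_of_le_of_lt (natDegree_jacQ m) h), jacQ_spec] at this
  simpa using this

lemma orth_pos (n : ℕ) :
    0 < ∫ x in (-1 : ℝ)..1, (1 - x) ^ 3 * (jacQ n).eval x * (jacQ n).eval x := by
  have hc : Continuous fun x : ℝ => (1 - x) ^ 3 * (jacQ n).eval x * (jacQ n).eval x := by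
    fun_prop
  have hnn : ∀ x ∈ Set.Ioc (-1 : ℝ) 1, 0 ≤ (1 - x) ^ 3 * (jacQ n).eval x * (jacQ n).eval x := by
    intro x hx
    rw [mul_assoc]
    exact mul_nonneg (pow_nonneg (by linarith [hx.2]) _) (mul_self_nonneg _)
  obtain ⟨x, hx, hx0⟩ : ∃ x ∈ Set.Ioo (-1 : ℝ) 1, (jacQ n).eval x ≠ 0 := by
    by_contra! hcon
    apply jacQ_ne n
    apply Polynomial.eq_zero_of_infinite_isRoot
    exact (Set.Ioo_infinite (by norm_num : (-1 : ℝ) < 1)).mono (fun x hx => hcon x hx)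
  refine intervalIntegral.integral_pos (by norm_num) hc.continuousOn hnn
    ⟨x, Set.Ioo_subset_Icc_self hx, ?_⟩
  rw [mul_assoc]
  exact mul_pos (pow_pos (by linarith [hx.2]) _) (mul_self_pos.mpr hx0)

lemma jacobiP_eq (n : ℕ) {x : ℝ} (hx : x ≠ 1) : jacobiP 3 n x = (jacQ n).eval x := by
  have hx' : (1 - x) ≠ 0 := sub_ne_zero.mpr hx.symm
  have hit : ∀ (k : ℕ) (p : Polynomial ℝ), iteratedDeriv k (fun t => p.eval t)
      = fun t => (Polynomial.derivative^[k] p).eval t := by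
    intro k
    induction k with
    | zero => intro p; simp
    | succ k ih =>
      intro p
      rw [iteratedDeriv_succ, ih, Function.iterate_succ_apply']
      funext t
      exact Polynomial.deriv _
  have hf : (fun t : ℝ => (1 - t) ^ (3 : ℝ) * (t ^ 2 - 1) ^ n) =
      fun t => (((1 - Polynomial.X) ^ 3 * (Polynomial.X ^ 2 - 1) ^ n : Polynomial ℝ)).eval t := by
    funext t
    have : (1 - t) ^ (3 : ℝ) = (1 - t) ^ 3 := by
      exact_mod_cast Real.rpow_natCast (1 - t) 3
    simp [this]
  have h3 : (1 - x) ^ (3 : ℝ) = (1 - x) ^ 3 := by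
    exact_mod_cast Real.rpow_natCast (1 - x) 3
  have hs := congrArg (Polynomial.eval x) (jacQ_spec n)
  rw [rodF, Polynomial.iterate_derivative_C_mul] at hs
  simp only [Polynomial.eval_mul, Polynomial.eval_C, Polynomial.eval_pow, Polynomial.eval_sub,
    Polynomial.eval_one, Polynomial.eval_X] at hs
  rw [jacobiP, hf, hit, h3]
  have h4 : (2 ^ n * (n.factorial : ℝ)) ≠ 0 := by positivity
  rw [one_div_mul_eq_div] at hs ⊢
  rw [div_eq_iff h4] at hs
  beta_reduce
  rw [hs]
  field_simp

noncomputable def jacR (n : ℕ) (x : ℝ) : ℝ := ∫ t in (-1 : ℝ)..x, (jacQ n).eval t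

lemma jacR_deriv (n : ℕ) (x : ℝ) : HasDerivAt (jacR n) ((jacQ n).eval x) x :=
  intervalIntegral.integral_hasDerivAt_right
    ((jacQ n).continuous.intervalIntegrable _ _)
    ((jacQ n).continuous.stronglyMeasurableAtFilter _ _) (jacQ n).continuous.continuousAt

lemma jacobiPhat_eq (n : ℕ) (x : ℝ) : jacobiPhat 3 (n + 1) x = jacR n x := by
  simp only [jacobiPhat, jacR, Nat.add_sub_cancel, Nat.add_eq_zero_iff, one_ne_zero, and_false,
    if_false]
  apply intervalIntegral.integral_congr_ae
  have : ∀ᵐ t : ℝ, t ≠ 1 := by simp [ae_iff]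
  filter_upwards [this] with t ht _ using jacobiP_eq n ht

noncomputable def jacA (n : ℕ) (x : ℝ) : ℝ := jacR n x - (1 - x) / 2 * (jacQ n).eval x

lemma jacA_deriv (n : ℕ) (x : ℝ) : HasDerivAt (jacA n)
    (3 / 2 * (jacQ n).eval x - (1 - x) / 2 * (jacQ n).derivative.eval x) x := by
  have h1 : HasDerivAt (fun x : ℝ => (1 - x) / 2) (-1 / 2) x :=
    ((hasDerivAt_id x).const_sub 1).div_const 2
  have h2 := (jacR_deriv n x).sub (h1.mul ((jacQ n).hasDerivAt x))
  refine HasDerivAt.congr_deriv (f := jacA n) h2 ?_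
  ring

lemma jacA_cont (n : ℕ) : Continuous (jacA n) :=
  continuous_iff_continuousAt.mpr fun x => (jacA_deriv n x).continuousAt

lemma A_integral (j m : ℕ) : ∫ x in (-1 : ℝ)..1, (1 - x) * jacA j x * jacA m x
    = 1 / 4 * ∫ x in (-1 : ℝ)..1, (1 - x) ^ 3 * (jacQ j).eval x * (jacQ m).eval x := by
  have hA := jacA_cont j
  have hA' := jacA_cont m
  rw [← intervalIntegral.integral_const_mul, ← sub_eq_zero,
    ← intervalIntegral.integral_sub
      (Continuous.intervalIntegrable (by fun_prop) _ _)
      (Continuous.intervalIntegrable (by fun_prop) _ _)]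
  have hd : ∀ x ∈ Set.uIcc (-1 : ℝ) 1, HasDerivAt
      (fun x => -(1 / 2) * ((1 - x) ^ 2 * jacR j x * jacA m x)
        - 1 / 4 * ((1 - x) ^ 3 * jacR j x * (jacQ m).eval x))
      ((1 - x) * jacA j x * jacA m x
        - 1 / 4 * ((1 - x) ^ 3 * (jacQ j).eval x * (jacQ m).eval x)) x := by
    intro x _
    have h1 : HasDerivAt (fun x : ℝ => (1 - x)) (-1) x := (hasDerivAt_id x).const_sub 1
    have h2 := ((((h1.pow 2).mul (jacR_deriv j x)).mul (jacA_deriv m x)).const_mul (-(1 / 2))).sub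
      ((((h1.pow 3).mul (jacR_deriv j x)).mul ((jacQ m).hasDerivAt x)).const_mul (1 / 4))
    refine HasDerivAt.congr_deriv h2 ?_
    simp [jacA]
    ring
  rw [intervalIntegral.integral_eq_sub_of_hasDerivAt hd
    (Continuous.intervalIntegrable (by fun_prop) _ _)]
  simp [jacR]

lemma hFun_eq (n : ℕ) {y : ℝ} (hy : y ≠ 1) : hFun (n + 1) y = jacA n (2 * y - 1) := by
  rw [hFun, jacobiPhat_eq, Nat.add_sub_cancel, jacobiP_eq n (fun h => hy (by linarith)), jacA]
  ring

lemma h_integral (j m : ℕ) : ∫ y in (0 : ℝ)..1, (1 - y) * hFun (j + 1) y * hFun (m + 1) y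
    = 1 / 16 * ∫ x in (-1 : ℝ)..1, (1 - x) ^ 3 * (jacQ j).eval x * (jacQ m).eval x := by
  have h1 : ∫ y in (0 : ℝ)..1, (1 - y) * hFun (j + 1) y * hFun (m + 1) y
      = ∫ y in (0 : ℝ)..1, (fun x => 1 / 2 * ((1 - x) * jacA j x * jacA m x)) (2 * y - 1) := by
    apply intervalIntegral.integral_congr_ae
    have : ∀ᵐ t : ℝ, t ≠ 1 := by simp [ae_iff]
    filter_upwards [this] with t ht _
    rw [hFun_eq j ht, hFun_eq m ht]
    ring
  rw [h1, intervalIntegral.integral_comp_mul_sub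
    (fun x => 1 / 2 * ((1 - x) * jacA j x * jacA m x)) (two_ne_zero),
    intervalIntegral.integral_const_mul]
  norm_num
  rw [A_integral]
  ring

/-- The functions `h_j`, `j ≥ 1`, are orthogonal on `(0,1)` with respect to the
weight `1 - y`. -/
theorem hFun_orthogonal :
    ∃ c : ℕ → ℝ, (∀ j, 0 < c j) ∧ ∀ j m : ℕ, 1 ≤ j → 1 ≤ m →
      ∫ y in (0 : ℝ)..1, (1 - y) * hFun j y * hFun m y
        = c j * (if j = m then 1 else 0) := by
  refine ⟨fun j => 1 / 16 * ∫ x in (-1 : ℝ)..1,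
    (1 - x) ^ 3 * (jacQ (j - 1)).eval x * (jacQ (j - 1)).eval x,
    fun j => mul_pos (by norm_num) (orth_pos _), ?_⟩
  intro j m hj hm
  obtain ⟨j, rfl⟩ := Nat.exists_eq_add_of_le' hj
  obtain ⟨m, rfl⟩ := Nat.exists_eq_add_of_le' hm
  rw [h_integral]
  rcases lt_trichotomy j m with h | rfl | h
  · have := orth_lt h
    simp_rw [mul_right_comm _ (Polynomial.eval _ (jacQ m))] at this
    rw [this, if_neg (by omega)]; simp
  · simp
  · rw [orth_lt h, if_neg (by omega)]; simp
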